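/- Let (R,m) be a two-dimensional regular local ring and let p ≥ 2 be an integer. Then rt(m^p) = 2, and there are exactly binomial(p,2) equations of degree 2 in a minimal homogeneous generating set of the ideal of equations Q of the Rees algebra R(m^p), presented with respect to the generators x^p, x^{p-1}y, …, xy^{p-1}, y^p of m^p, where x,y is a regular system of parameters of R. -/

import Mathlib

open MvPolynomial

section Defs

variable {R : Type*} [CommRing R]

/-- The presentation of the Rees algebra of the ideal generated by `g`,
sending the `i`-th variable to `(g i) · t` inside `R[t]`. -/
noncomputable def reesPres {m : ℕ} (g : Fin m → R) :
    MvPolynomial (Fin m) R →ₐ[R] Polynomial R :=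
  aeval fun i => Polynomial.C (g i) * Polynomial.X

/-- `Q`, the ideal of equations of the Rees algebra w.r.t. the generators `g`. -/
noncomputable def presKer {m : ℕ} (g : Fin m → R) : Ideal (MvPolynomial (Fin m) R) :=
  RingHom.ker (reesPres g)

/-- `Q⟨d⟩`, the subideal of `Q` generated by the homogeneous equations of degree at most `d`. -/
noncomputable def presKerLe {m : ℕ} (g : Fin m → R) (d : ℕ) : Ideal (MvPolynomial (Fin m) R) :=
  Ideal.span {F | F ∈ presKer g ∧ ∃ k ≤ d, F.IsHomogeneous k}

/-- `Q_n`, the `R`-module of homogeneous equations of degree `n`. -/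
noncomputable def presKerHomog {m : ℕ} (g : Fin m → R) (n : ℕ) :
    Submodule R (MvPolynomial (Fin m) R) :=
  homogeneousSubmodule (Fin m) R n ⊓ (presKer g).restrictScalars R

/-- `(Q/Q⟨n-1⟩)_n`, the degree-`n` part of `Q/Q⟨n-1⟩`. -/
abbrev presE {m : ℕ} (g : Fin m → R) (n : ℕ) :=
  presKerHomog g n ⧸
    Submodule.comap (presKerHomog g n).subtype ((presKerLe g (n - 1)).restrictScalars R)

end Defs

/-!
A two-dimensional regular local ring with regular parameters `x, y` is a domain in which `x` is
prime, so `x, y` is a regular sequence. The monomials in `T₀, …, Tₚ` of degree `n` and weight `w`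
(where `Tᵢ` has weight `i`) all map to `xⁿᵖ⁻ʷ yʷ tⁿ`, and the quadrics `Tᵢ Tⱼ - T₀ Tᵢ₊ⱼ`,
`Tᵢ Tⱼ - Tᵢ₊ⱼ₋ₚ Tₚ` with `1 ≤ i ≤ j ≤ p - 1` identify them all with one standard monomial. A
relation among the images of the standard monomials is a combination of the relations between
neighbouring weights because `x, y` is regular, and these are multiples of the linear equations
`y Tᵢ - x Tᵢ₊₁`. So linear equations and quadrics generate `Q`. The quadrics are minimal because
linear equations have coefficients in `(x, y)`, whereas the matrix of coefficients of the quadrics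
at the monomials `Tᵢ Tⱼ`, `1 ≤ i ≤ j ≤ p - 1`, is the identity.
-/

section RegularSequence

open IsLocalRing RingTheory.Sequence

variable {R : Type*} [CommRing R]

theorem isWeaklyRegular_pair_iff {x y : R} :
    IsWeaklyRegular R [x, y] ↔ (∀ a, x * a = 0 → a = 0) ∧ ∀ a, x ∣ y * a → x ∣ a := by
  rw [isWeaklyRegular_cons_iff, isWeaklyRegular_singleton_iff,
    isSMulRegular_iff_right_eq_zero_of_smul, isSMulRegular_quotient_iff_mem_of_smul_mem]
  simp only [smul_eq_mul, Submodule.mem_smul_pointwise_iff_exists, Submodule.mem_top, true_and,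
    dvd_def, eq_comm]

theorem dvd_of_dvd_pow_mul_of_isWeaklyRegular {x y : R}
    (h : IsWeaklyRegular R [x, y]) {a : R} (k : ℕ) (hdvd : x ∣ y ^ k * a) : x ∣ a := by
  induction k with
  | zero => simpa using hdvd
  | succ k ih =>
    rw [pow_succ', mul_assoc] at hdvd
    exact ih ((isWeaklyRegular_pair_iff.mp h).2 _ hdvd)

/-- Over a weakly regular sequence `x, y`, the syzygies of `xᴷ, xᴷ⁻¹y, …, yᴷ` are generated by the
obvious ones between neighbours: the last coefficient is divisible by `x`, and subtracting the
corresponding multiple of the last obvious syzygy lowers `K`. -/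
theorem sum_smul_mem_of_sum_mul_pow_eq_zero {x y : R} (h : IsWeaklyRegular R [x, y])
    {V : Type*} [AddCommGroup V] [Module R V] {N : Submodule R V} {M : ℕ → V} {K : ℕ} {c : ℕ → R}
    (hM : ∀ w < K, y • M w - x • M (w + 1) ∈ N)
    (hc : ∑ w ∈ Finset.range (K + 1), c w * (x ^ (K - w) * y ^ w) = 0) :
    ∑ w ∈ Finset.range (K + 1), c w • M w ∈ N := by
  induction K generalizing c with
  | zero =>
    have hc0 : c 0 = 0 := by simpa using hc
    simp [hc0]
  | succ K ih =>
    have factor_x : ∑ w ∈ Finset.range (K + 1), c w * (x ^ (K + 1 - w) * y ^ w) =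
        x * ∑ w ∈ Finset.range (K + 1), c w * (x ^ (K - w) * y ^ w) := by
      rw [Finset.mul_sum]
      refine Finset.sum_congr rfl fun w hw => ?_
      rw [Nat.succ_sub (Finset.mem_range_succ_iff.mp hw), pow_succ]
      ring
    rw [Finset.sum_range_succ, factor_x, Nat.sub_self, pow_zero, one_mul] at hc
    obtain ⟨d, hd⟩ : x ∣ c (K + 1) := by
      refine dvd_of_dvd_pow_mul_of_isWeaklyRegular h (K + 1) ?_
      rw [mul_comm, ← dvd_add_right (dvd_mul_right x _), hc]
      exact dvd_zero x
    have hreduced := ih (c := c + Pi.single K (d * y)) (fun w hw => hM w (by omega)) <| by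
      refine (isWeaklyRegular_pair_iff.mp h).1 _ ?_
      simp only [Pi.add_apply, Pi.single_apply, add_mul, ite_mul, zero_mul,
        Finset.sum_add_distrib, Finset.sum_ite_eq', Finset.self_mem_range_succ, if_true,
        Nat.sub_self, pow_zero, one_mul]
      linear_combination hc - y ^ (K + 1) * hd
    convert N.sub_mem hreduced (N.smul_mem d (hM K K.lt_succ_self)) using 1
    simp only [Finset.sum_range_succ _ (K + 1), hd, Pi.add_apply, Pi.single_apply, add_smul,
      ite_smul, zero_smul, Finset.sum_add_distrib, Finset.sum_ite_eq',
      Finset.self_mem_range_succ, if_true, smul_sub, smul_smul, mul_comm x d]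
    abel

theorem span_pair_ne_top_of_isRegular {x y : R} (h : IsRegular R [x, y]) :
    Ideal.span {x, y} ≠ ⊤ := by
  intro htop
  refine h.top_ne_smul ?_
  rw [Ideal.ofList_cons, Ideal.ofList_singleton, ← Ideal.span_insert, htop, Submodule.top_smul]

variable [IsLocalRing R] [IsNoetherianRing R]

theorem finiteMultiplicity_of_mem_maximalIdeal {y a : R} (hy : y ∈ maximalIdeal R) (ha : a ≠ 0) :
    FiniteMultiplicity y a := by
  by_contra hinf
  have hyne : Ideal.span {y} ≠ ⊤ := fun h => hy (Ideal.span_singleton_eq_top.mp h)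
  have hmem : a ∈ ⨅ n, Ideal.span {y} ^ n := by
    simp only [Ideal.mem_iInf, Ideal.span_singleton_pow, Ideal.mem_span_singleton]
    exact FiniteMultiplicity.not_iff_forall.mp hinf
  rw [Ideal.iInf_pow_eq_bot_of_isLocalRing _ hyne] at hmem
  exact ha hmem

theorem isDomain_of_maximalIdeal_eq_span_singleton {y : R}
    (hm : maximalIdeal R = Ideal.span {y}) (hy : ¬IsNilpotent y) : IsDomain R := by
  have eq_pow_mul_unit (a : R) (ha : a ≠ 0) : ∃ n u, IsUnit u ∧ a = y ^ n * u := by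
    have hymem : y ∈ maximalIdeal R := hm ▸ Ideal.mem_span_singleton_self y
    obtain ⟨u, hau, hu⟩ :=
      (finiteMultiplicity_of_mem_maximalIdeal hymem ha).exists_eq_pow_mul_and_not_dvd
    rw [← Ideal.mem_span_singleton, ← hm, notMem_maximalIdeal] at hu
    exact ⟨_, u, hu, hau⟩
  have : NoZeroDivisors R := ⟨fun {a b} hab => by
    by_contra! hne
    obtain ⟨n, u, hu, rfl⟩ := eq_pow_mul_unit a hne.1
    obtain ⟨k, v, hv, rfl⟩ := eq_pow_mul_unit b hne.2
    refine hy ⟨n + k, (hu.mul hv).mul_left_eq_zero.mp ?_⟩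
    rw [← hab]
    ring⟩
  exact NoZeroDivisors.to_isDomain R

/-- Two of the infinitely many elements `x + yᵏ⁺¹` lying in the same prime would force `y`, hence
also `x`, into it. -/
theorem exists_add_pow_mul_notMem_minimalPrimes {x y : R}
    (hm : maximalIdeal R = Ideal.span {x, y}) (hmin : maximalIdeal R ∉ minimalPrimes R) :
    ∃ k, ∀ q ∈ minimalPrimes R, x + y ^ k * y ∉ q := by
  by_contra! hall
  choose q hq hmem using hall
  have : Finite (minimalPrimes R) := minimalPrimes.finite_of_isNoetherianRing R
  obtain ⟨i, j, hij, hqij⟩ := Finite.exists_ne_map_eq_of_infinite fun k =>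
    (⟨q k, hq k⟩ : minimalPrimes R)
  wlog hlt : i < j generalizing i j
  · exact this j i hij.symm hqij.symm (by omega)
  obtain ⟨d, rfl⟩ := Nat.exists_eq_add_of_lt hlt
  have hqi : (q i).IsPrime := (hq i).1.1
  have hqeq : q i = q (i + d + 1) := congrArg Subtype.val hqij
  have hdiff : (1 - y ^ (d + 1)) * y ^ (i + 1) ∈ q i := by
    convert (q i).sub_mem (hmem i) (hqeq ▸ hmem (i + d + 1)) using 1
    ring
  have hyq : y ∈ q i := by
    have hym : y ∈ maximalIdeal R := hm ▸ Ideal.subset_span (by simp)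
    have hunit : IsUnit (1 - y ^ (d + 1)) :=
      isUnit_one_sub_self_of_mem_nonunits _ (Ideal.pow_mem_of_mem _ hym _ d.succ_pos)
    exact hqi.mem_of_pow_mem _ ((Ideal.unit_mul_mem_iff_mem _ hunit).mp hdiff)
  have hxq : x ∈ q i :=
    (Ideal.add_mem_iff_left _ (Ideal.mul_mem_left _ _ hyq)).mp (hmem i)
  have hmq : maximalIdeal R = q i := le_antisymm
    (hm ▸ Ideal.span_le.mpr (Set.pair_subset hxq hyq)) (le_maximalIdeal hqi.ne_top)
  exact hmin (hmq ▸ hq i)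

theorem not_dvd_pow_of_maximalIdeal_eq_span_pair {x y : R}
    (hheight : 1 < (maximalIdeal R).height) (hm : maximalIdeal R = Ideal.span {x, y})
    (k : ℕ) : ¬x ∣ y ^ k := by
  intro hdvd
  refine hheight.not_ge
    (Ideal.height_le_one_of_isPrincipal_of_mem_minimalPrimes (Ideal.span {x}) _ ?_)
  refine ⟨⟨inferInstance, ?_⟩, ?_⟩
  · rw [hm]
    exact Ideal.span_mono (by simp)
  · rintro q ⟨hq, hxq⟩ -
    rw [hm, Ideal.span_le, Set.pair_subset_iff]
    exact ⟨hxq (Ideal.mem_span_singleton_self x),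
      hq.mem_of_pow_mem k (hxq (Ideal.mem_span_singleton.mpr hdvd))⟩

theorem isPrime_span_singleton_of_maximalIdeal_eq_span_pair {x y : R}
    (hheight : 1 < (maximalIdeal R).height) (hm : maximalIdeal R = Ideal.span {x, y}) :
    (Ideal.span {x}).IsPrime := by
  have hnot := not_dvd_pow_of_maximalIdeal_eq_span_pair hheight hm
  have : Nontrivial (R ⧸ Ideal.span {x}) := Ideal.Quotient.nontrivial_iff.mpr fun h =>
    hnot 0 (Ideal.mem_span_singleton.mp (h ▸ Submodule.mem_top))
  have : IsLocalRing (R ⧸ Ideal.span {x}) :=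
    .of_surjective' (Ideal.Quotient.mk _) Ideal.Quotient.mk_surjective
  rw [← Ideal.Quotient.isDomain_iff_prime]
  refine isDomain_of_maximalIdeal_eq_span_singleton (y := Ideal.Quotient.mk _ y) ?_ ?_
  · rw [← map_maximalIdeal_of_surjective _ (Ideal.Quotient.mk_surjective (I := Ideal.span {x})),
      hm, Ideal.map_span, Set.image_pair,
      Ideal.Quotient.eq_zero_iff_mem.mpr (Ideal.mem_span_singleton_self x), Ideal.span_insert_zero]
  · rintro ⟨k, hk⟩
    rw [← map_pow, Ideal.Quotient.eq_zero_iff_mem, Ideal.mem_span_singleton] at hk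
    exact hnot k hk

theorem isDomain_of_maximalIdeal_eq_span_pair {x y : R}
    (hheight : 1 < (maximalIdeal R).height) (hm : maximalIdeal R = Ideal.span {x, y}) :
    IsDomain R := by
  obtain ⟨k, hk⟩ := exists_add_pow_mul_notMem_minimalPrimes hm fun hmin =>
    absurd (Ideal.height_eq_zero_iff.mpr hmin) (zero_lt_one.trans hheight).ne'
  rw [← Ideal.span_pair_add_mul_right x y (y ^ k)] at hm
  set z := x + y ^ k * y
  have hz : (Ideal.span {z}).IsPrime :=
    isPrime_span_singleton_of_maximalIdeal_eq_span_pair hheight hm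
  obtain ⟨q, hq, hqz⟩ := Ideal.exists_minimalPrimes_le (bot_le : ⊥ ≤ Ideal.span {z})
  have hqprime : q.IsPrime := hq.1.1
  have hqbot : q = ⊥ := by
    refine Submodule.eq_bot_of_le_smul_of_le_jacobson_bot (maximalIdeal R) q
      (IsNoetherian.noetherian q) (fun a ha => ?_) (jacobson_eq_maximalIdeal _ bot_ne_top).ge
    obtain ⟨b, rfl⟩ := Ideal.mem_span_singleton.mp (hqz ha)
    have hbq : b ∈ q := (hqprime.mem_or_mem ha).resolve_left (hk q hq)
    exact Submodule.smul_mem_smul (hm ▸ Ideal.subset_span (by simp)) hbq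
  subst hqbot
  exact .of_bot_isPrime R

theorem isRegular_of_maximalIdeal_eq_span_pair {x y : R} (hdim : 1 < ringKrullDim R)
    (hm : maximalIdeal R = Ideal.span {x, y}) : IsRegular R [x, y] := by
  have hheight : 1 < (maximalIdeal R).height := by
    rwa [← maximalIdeal_height_eq_ringKrullDim, ← WithBot.coe_one, WithBot.coe_lt_coe] at hdim
  have := isDomain_of_maximalIdeal_eq_span_pair hheight hm
  have hprime := isPrime_span_singleton_of_maximalIdeal_eq_span_pair hheight hm
  have hx0 : x ≠ 0 := by
    rintro rfl
    exact not_dvd_pow_of_maximalIdeal_eq_span_pair hheight (Set.pair_comm 0 y ▸ hm) 1 (by simp)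
  have hxprime : Prime x := (Ideal.span_singleton_prime hx0).mp hprime
  have hxy : ¬x ∣ y := by
    simpa using not_dvd_pow_of_maximalIdeal_eq_span_pair hheight hm 1
  refine .of_isWeaklyRegular_of_mem_maximalIdeal R ?_ (isWeaklyRegular_pair_iff.mpr
    ⟨fun a ha => (mul_eq_zero.mp ha).resolve_left hx0,
      fun a ha => (hxprime.dvd_or_dvd ha).resolve_left hxy⟩)
  simpa [hm] using Set.pair_subset_iff.mp (Ideal.subset_span (s := {x, y}))

end RegularSequence

section ReesEquations

variable {R : Type*} [CommRing R] {m : ℕ} {g : Fin m → R}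

theorem reesPres_of_isHomogeneous {F : MvPolynomial (Fin m) R} {n : ℕ} (hF : F.IsHomogeneous n) :
    reesPres g F = Polynomial.C (aeval g F) * Polynomial.X ^ n := by
  induction hF using IsWeightedHomogeneous.induction_on with
  | zero => simp
  | add F G _ _ hF hG => rw [map_add, hF, hG, map_add, map_add, add_mul]
  | monomial d r hd =>
    have hdeg : n = ∑ i ∈ d.support, d i := by
      rw [← hd, ← Finsupp.degree_apply, Finsupp.degree_eq_weight_one, ← Pi.one_def]
    simp only [hdeg, reesPres, aeval_monomial, Finsupp.prod, mul_pow, Finset.prod_mul_distrib,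
      Finset.prod_pow_eq_pow_sum, map_mul, map_prod, map_pow, mul_assoc, Polynomial.algebraMap_eq,
      Algebra.algebraMap_self_apply]

theorem coeff_reesPres (F : MvPolynomial (Fin m) R) (n : ℕ) :
    (reesPres g F).coeff n = aeval g (homogeneousComponent n F) := by
  conv_lhs => rw [← sum_homogeneousComponent F, map_sum]
  simp only [reesPres_of_isHomogeneous (homogeneousComponent_isHomogeneous _ F),
    Polynomial.finsetSum_coeff, Polynomial.coeff_C_mul_X_pow, Finset.sum_ite_eq, Finset.mem_range]
  split_ifs with hn
  · rfl
  · rw [homogeneousComponent_eq_zero _ _ (by omega), map_zero]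

theorem mem_presKer_iff_of_isHomogeneous {F : MvPolynomial (Fin m) R} {n : ℕ}
    (hF : F.IsHomogeneous n) : F ∈ presKer g ↔ aeval g F = 0 := by
  rw [presKer, RingHom.mem_ker, reesPres_of_isHomogeneous hF, Polynomial.C_mul_X_pow_eq_monomial,
    Polynomial.monomial_eq_zero_iff]

theorem homogeneousComponent_mem_presKer {F : MvPolynomial (Fin m) R} (hF : F ∈ presKer g)
    (n : ℕ) : homogeneousComponent n F ∈ presKer g := by
  rw [presKer, RingHom.mem_ker] at hF
  rw [mem_presKer_iff_of_isHomogeneous (homogeneousComponent_isHomogeneous n F), ← coeff_reesPres,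
    hF, Polynomial.coeff_zero]

theorem presKer_le_of_forall_presKerHomog_le {J : Ideal (MvPolynomial (Fin m) R)}
    (hJ : ∀ n, presKerHomog g n ≤ J.restrictScalars R) : presKer g ≤ J := by
  intro F hF
  rw [← sum_homogeneousComponent F]
  exact J.sum_mem fun n _ =>
    hJ n ⟨homogeneousComponent_isHomogeneous n F, homogeneousComponent_mem_presKer hF n⟩

theorem presKerLe_le_presKer (d : ℕ) : presKerLe g d ≤ presKer g :=
  Ideal.span_le.mpr fun _ hF => hF.1

theorem presKerLe_mono : Monotone (presKerLe g) := fun _ _ hde =>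
  Ideal.span_mono fun _ ⟨hF, k, hk, hFk⟩ => ⟨hF, k, hk.trans hde, hFk⟩

theorem presKerHomog_le_presKerLe (n : ℕ) :
    presKerHomog g n ≤ (presKerLe g n).restrictScalars R :=
  fun _ hF => Ideal.subset_span ⟨hF.2, n, le_rfl, hF.1⟩

theorem presKerHomog_zero : presKerHomog g 0 = ⊥ := by
  rw [eq_bot_iff]
  rintro F ⟨hF, hFker⟩
  rw [homogeneousSubmodule_zero] at hF
  obtain ⟨r, rfl⟩ := Submodule.mem_one.mp hF
  have hr : r = 0 := by
    simpa using (mem_presKer_iff_of_isHomogeneous (isHomogeneous_C _ r)).mp hFker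
  simp [hr]

end ReesEquations

section StandardMonomials

variable (R : Type*) [CommRing R] (p : ℕ)

/-- The variable `Tᵢ`, indexed by natural numbers. Only the indices `i ≤ p` are meaningful; larger
ones are reduced modulo `p + 1`. -/
noncomputable def natVar (i : ℕ) : MvPolynomial (Fin (p + 1)) R :=
  X (Fin.ofNat (p + 1) i)

/-- The standard monomial of degree `n` and weight `w`, where `Tᵢ` has weight `i`. Explicitly it
is `T₀ᵃ Tᵣ Tₚᵇ` with `w = r + b p` and `n = a + 1 + b`. It represents all the monomials of
degree `n` and weight `w ≤ n p`, which have the same image `xⁿᵖ⁻ʷ yʷ tⁿ` in the Rees algebra. -/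
noncomputable def stdMonomial : ℕ → ℕ → MvPolynomial (Fin (p + 1)) R
  | 0, _ => 1
  | n + 1, w => if w ≤ p then natVar R p 0 ^ n * natVar R p w
      else natVar R p p * stdMonomial n (w - p)

variable {R p}

theorem isHomogeneous_natVar (i : ℕ) : (natVar R p i).IsHomogeneous 1 :=
  isHomogeneous_X _ _

theorem homogeneousSubmodule_one_eq_span_natVar :
    homogeneousSubmodule (Fin (p + 1)) R 1 =
      Submodule.span R (natVar R p '' Finset.range (p + 1)) := by
  rw [homogeneousSubmodule_one_eq_span_X]
  congr 1
  ext F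
  constructor
  · rintro ⟨i, rfl⟩
    exact ⟨i, Finset.mem_coe.mpr (Finset.mem_range.mpr i.isLt), by simp [natVar]⟩
  · rintro ⟨i, -, rfl⟩
    exact ⟨_, rfl⟩

theorem stdMonomial_succ_of_le {n w : ℕ} (hw : w ≤ p) :
    stdMonomial R p (n + 1) w = natVar R p 0 ^ n * natVar R p w := by
  rw [stdMonomial, if_pos hw]

theorem stdMonomial_zero_right (n : ℕ) : stdMonomial R p n 0 = natVar R p 0 ^ n := by
  cases n with
  | zero => rw [stdMonomial, pow_zero]
  | succ n => rw [stdMonomial_succ_of_le p.zero_le, pow_succ]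

theorem stdMonomial_one {w : ℕ} (hw : w ≤ p) : stdMonomial R p 1 w = natVar R p w := by
  rw [stdMonomial_succ_of_le hw, pow_zero, one_mul]

theorem stdMonomial_succ_add (n w : ℕ) :
    stdMonomial R p (n + 1) (p + w) = natVar R p p * stdMonomial R p n w := by
  rcases w.eq_zero_or_pos with rfl | hw
  · rw [add_zero, stdMonomial_succ_of_le le_rfl, stdMonomial_zero_right, mul_comm]
  · rw [stdMonomial, if_neg (by omega), Nat.add_sub_cancel_left]

theorem stdMonomial_add_two {w : ℕ} (n : ℕ) (hw : w ≤ 2 * p) :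
    stdMonomial R p (n + 2) w = natVar R p 0 ^ n * stdMonomial R p 2 w := by
  rcases le_total w p with hwp | hwp
  · rw [stdMonomial_succ_of_le hwp, stdMonomial_succ_of_le hwp]
    ring
  · obtain ⟨v, rfl⟩ := Nat.exists_eq_add_of_le hwp
    have hv : v ≤ p := by omega
    rw [stdMonomial_succ_add, stdMonomial_succ_add, stdMonomial_succ_of_le hv, stdMonomial_one hv]
    ring

theorem isHomogeneous_stdMonomial (n w : ℕ) : (stdMonomial R p n w).IsHomogeneous n := by
  induction n generalizing w with
  | zero => exact isHomogeneous_one _ _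
  | succ n ih =>
    rcases le_or_gt w p with hw | hw
    · rw [stdMonomial_succ_of_le hw]
      simpa using ((isHomogeneous_natVar 0).pow n).mul (isHomogeneous_natVar (R := R) (p := p) w)
    · obtain ⟨v, rfl⟩ := Nat.exists_eq_add_of_le hw.le
      rw [stdMonomial_succ_add, add_comm n]
      exact (isHomogeneous_natVar p).mul (ih v)

end StandardMonomials

section Quadrics

variable (R : Type*) [CommRing R] (p : ℕ)

/-- Index set of the quadrics `Tᵢ Tⱼ - …` with `1 ≤ i ≤ j ≤ p - 1`: the pair `⟨j, i'⟩` with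
`i' < j < p` stands for `(i, j) = (i' + 1, j)`. -/
abbrev QuadricIndex := Σ j : Fin p, Fin j

/-- The quadric `Tᵢ Tⱼ - T₀ Tᵢ₊ⱼ` or `Tᵢ Tⱼ - Tᵢ₊ⱼ₋ₚ Tₚ`, according as `i + j ≤ p` or not. -/
noncomputable def quadric (s : QuadricIndex p) : MvPolynomial (Fin (p + 1)) R :=
  natVar R p (s.2 + 1) * natVar R p s.1 - stdMonomial R p 2 (s.2 + 1 + s.1)

variable {p}

/-- The exponent of `Tᵢ Tⱼ`, the non-standard monomial of `quadric R p ⟨j, i - 1⟩`. -/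
noncomputable def quadricExponent (s : QuadricIndex p) : Fin (p + 1) →₀ ℕ :=
  Finsupp.single (Fin.ofNat (p + 1) (s.2 + 1)) 1 + Finsupp.single (Fin.ofNat (p + 1) s.1) 1

theorem card_quadricIndex : Fintype.card (QuadricIndex p) = p.choose 2 := by
  rw [Fintype.card_sigma]
  simp only [Fintype.card_fin]
  rw [Fin.sum_univ_eq_sum_range (fun i => i), Finset.sum_range_id, Nat.choose_two_right]

variable {R}

theorem isHomogeneous_quadric (s : QuadricIndex p) : (quadric R p s).IsHomogeneous 2 :=
  ((isHomogeneous_natVar _).mul (isHomogeneous_natVar _)).sub (isHomogeneous_stdMonomial 2 _)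

theorem natVar_mul_natVar_sub_mem_span_quadric {i j : ℕ} (hi : i ≤ p) (hj : j ≤ p) :
    natVar R p i * natVar R p j - stdMonomial R p 2 (i + j) ∈
      Submodule.span R (Set.range (quadric R p)) := by
  wlog hij : i ≤ j generalizing i j
  · rw [mul_comm, add_comm i j]
    exact this hj hi (by omega)
  rcases i.eq_zero_or_pos with rfl | hi0
  · rw [zero_add, stdMonomial_succ_of_le hj, pow_one, sub_self]
    exact Submodule.zero_mem _
  rcases hj.eq_or_lt with rfl | hjp
  · rw [add_comm i, stdMonomial_succ_add, stdMonomial_one hi, mul_comm (natVar R j i), sub_self]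
    exact Submodule.zero_mem _
  obtain ⟨i, rfl⟩ := Nat.exists_eq_succ_of_ne_zero hi0.ne'
  exact Submodule.subset_span ⟨⟨⟨j, hjp⟩, ⟨i, hij⟩⟩, rfl⟩

theorem natVar_mul_stdMonomial_sub_mem_span_quadric {i w : ℕ} (n : ℕ) (hi : i ≤ p)
    (hw : w ≤ n * p) :
    natVar R p i * stdMonomial R p n w - stdMonomial R p (n + 1) (i + w) ∈
      Ideal.span (Set.range (quadric R p)) := by
  induction n generalizing w with
  | zero =>
    obtain rfl : w = 0 := by omega
    simp [stdMonomial_zero_right, stdMonomial_one hi]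
  | succ n ih =>
    rw [add_mul, one_mul] at hw
    rcases le_total w p with hwp | hwp
    · rw [stdMonomial_add_two n (by omega), stdMonomial_succ_of_le hwp, mul_left_comm, ← mul_sub]
      exact Ideal.mul_mem_left _ _ (Submodule.span_le_restrictScalars R _ _
        (natVar_mul_natVar_sub_mem_span_quadric hi hwp))
    · obtain ⟨v, rfl⟩ := Nat.exists_eq_add_of_le hwp
      rw [add_left_comm, stdMonomial_succ_add, stdMonomial_succ_add, mul_left_comm, ← mul_sub]
      exact Ideal.mul_mem_left _ _ (ih (by omega))

/-- Straightening: the quadrics rewrite every monomial into the standard one of the same degree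
and weight. -/
theorem homogeneousSubmodule_le_span_quadric_sup_span_stdMonomial (n : ℕ) :
    homogeneousSubmodule (Fin (p + 1)) R n ≤
      (Ideal.span (Set.range (quadric R p))).restrictScalars R ⊔
        Submodule.span R (stdMonomial R p n '' Finset.range (n * p + 1)) := by
  induction n with
  | zero =>
    refine le_trans ?_ le_sup_right
    simp [homogeneousSubmodule_zero, Submodule.one_eq_span, stdMonomial]
  | succ n ih =>
    rw [← homogeneousSubmodule_one_pow, pow_succ', homogeneousSubmodule_one_pow]
    refine (mul_le_mul_right ih _).trans ?_
    rw [Submodule.mul_sup, sup_le_iff]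
    refine ⟨le_sup_of_le_left (Submodule.mul_le.mpr fun F _ G hG => Ideal.mul_mem_left _ F hG), ?_⟩
    rw [homogeneousSubmodule_one_eq_span_natVar, Submodule.span_mul_span, Submodule.span_le]
    rintro _ ⟨_, ⟨i, hi, rfl⟩, _, ⟨w, hw, rfl⟩, rfl⟩
    rw [Finset.coe_range, Set.mem_Iio, Nat.lt_succ_iff] at hi hw
    beta_reduce
    rw [← sub_add_cancel (natVar R p i * _) (stdMonomial R p (n + 1) (i + w))]
    refine Submodule.add_mem_sup (natVar_mul_stdMonomial_sub_mem_span_quadric n hi hw)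
      (Submodule.subset_span ⟨i + w, ?_, rfl⟩)
    rw [Finset.coe_range, Set.mem_Iio, add_mul]
    omega

theorem homogeneousSubmodule_two_le_span_quadric_sup_span_stdMonomial :
    homogeneousSubmodule (Fin (p + 1)) R 2 ≤
      Submodule.span R (Set.range (quadric R p)) ⊔
        Submodule.span R (stdMonomial R p 2 '' Finset.range (2 * p + 1)) := by
  rw [← homogeneousSubmodule_one_pow, pow_two, homogeneousSubmodule_one_eq_span_natVar,
    Submodule.span_mul_span, Submodule.span_le]
  rintro _ ⟨_, ⟨i, hi, rfl⟩, _, ⟨j, hj, rfl⟩, rfl⟩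
  rw [Finset.coe_range, Set.mem_Iio, Nat.lt_succ_iff] at hi hj
  beta_reduce
  rw [← sub_add_cancel (natVar R p i * _) (stdMonomial R p 2 (i + j))]
  refine Submodule.add_mem_sup (natVar_mul_natVar_sub_mem_span_quadric hi hj)
    (Submodule.subset_span ⟨i + j, ?_, rfl⟩)
  rw [Finset.coe_range, Set.mem_Iio]
  omega

theorem quadricExponent_injective : Function.Injective (quadricExponent (p := p)) := by
  rintro ⟨⟨j, hj⟩, ⟨i, hi⟩⟩ ⟨⟨j', hj'⟩, ⟨i', hi'⟩⟩ h
  rw [quadricExponent, quadricExponent,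
    Finsupp.single_add_single_eq_single_add_single one_ne_zero one_ne_zero] at h
  simp only at hi hi'
  simp only [Fin.ext_iff, Fin.val_ofNat, Nat.mod_eq_of_lt (show i + 1 < p + 1 by omega),
    Nat.mod_eq_of_lt (show i' + 1 < p + 1 by omega), Nat.mod_eq_of_lt (show j < p + 1 by omega),
    Nat.mod_eq_of_lt (show j' < p + 1 by omega)] at h
  obtain ⟨rfl, rfl⟩ : i = i' ∧ j = j' := by omega
  rfl

theorem quadricExponent_eq_zero (s : QuadricIndex p) {k : Fin (p + 1)}
    (hk : k = 0 ∨ k = Fin.last p) : quadricExponent s k = 0 := by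
  obtain ⟨⟨j, hj⟩, ⟨i, hi⟩⟩ := s
  simp only at hi
  have hkval : (k : ℕ) = 0 ∨ (k : ℕ) = p := 
    hk.imp (fun h => by rw [h, Fin.val_zero]) fun h => by rw [h, Fin.val_last]
  simp only [quadricExponent, Finsupp.add_apply, Finsupp.single_apply, Fin.ext_iff, Fin.val_ofNat,
    Nat.mod_eq_of_lt (show i + 1 < p + 1 by omega), Nat.mod_eq_of_lt (show j < p + 1 by omega)]
  rw [if_neg (by omega), if_neg (by omega), add_zero]

theorem coeff_quadricExponent_stdMonomial_two (s : QuadricIndex p) (w : ℕ) :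
    coeff (quadricExponent s) (stdMonomial R p 2 w) = 0 := by
  have coeff_X_mul_eq_zero {k : Fin (p + 1)} (hk : k = 0 ∨ k = Fin.last p)
      (F : MvPolynomial (Fin (p + 1)) R) : coeff (quadricExponent s) (X k * F) = 0 := by
    rw [coeff_X_mul', if_neg (Finsupp.notMem_support_iff.mpr (quadricExponent_eq_zero s hk))]
  rw [stdMonomial]
  split_ifs
  · rw [pow_one]
    exact coeff_X_mul_eq_zero (.inl (by simp)) _
  · exact coeff_X_mul_eq_zero (.inr (by simp)) _

theorem coeff_quadricExponent_quadric (s t : QuadricIndex p) :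
    coeff (quadricExponent s) (quadric R p t) = if t = s then 1 else 0 := by
  have hmonomial : natVar R p (t.2 + 1) * natVar R p t.1 = monomial (quadricExponent t) 1 := by
    rw [natVar, natVar, X, X, monomial_mul, one_mul, quadricExponent]
  rw [quadric, coeff_sub, coeff_quadricExponent_stdMonomial_two, sub_zero, hmonomial,
    coeff_monomial]
  simp only [quadricExponent_injective.eq_iff]

end Quadrics

section MonomialGenerators

open RingTheory.Sequence

variable {R : Type*} [CommRing R] {x y : R}

/-- The generators `xᵖ, xᵖ⁻¹y, …, yᵖ` of the ideal `(x, y)ᵖ`. -/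
abbrev monomialGens (x y : R) (p : ℕ) : Fin (p + 1) → R :=
  fun i => x ^ (p - (i : ℕ)) * y ^ (i : ℕ)

variable {p : ℕ}

theorem aeval_natVar {i : ℕ} (hi : i ≤ p) :
    aeval (monomialGens x y p) (natVar R p i) = x ^ (p - i) * y ^ i := by
  rw [natVar, aeval_X, monomialGens, Fin.val_ofNat, Nat.mod_eq_of_lt (Nat.lt_succ_of_le hi)]

theorem aeval_stdMonomial {n w : ℕ} (hw : w ≤ n * p) :
    aeval (monomialGens x y p) (stdMonomial R p n w) = x ^ (n * p - w) * y ^ w := by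
  induction n generalizing w with
  | zero =>
    obtain rfl : w = 0 := by omega
    simp [stdMonomial]
  | succ n ih =>
    rw [add_mul, one_mul] at hw ⊢
    rcases le_total w p with hwp | hwp
    · rw [stdMonomial_succ_of_le hwp, map_mul, map_pow, aeval_natVar p.zero_le, aeval_natVar hwp,
        Nat.add_sub_assoc hwp, pow_add, mul_comm n, pow_mul, Nat.sub_zero, pow_zero, mul_one,
        mul_assoc]
    · obtain ⟨v, rfl⟩ := Nat.exists_eq_add_of_le hwp
      rw [stdMonomial_succ_add, map_mul, aeval_natVar le_rfl, ih (by omega), add_comm (n * p),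
        Nat.add_sub_add_left, Nat.sub_self]
      ring

theorem smul_natVar_sub_mem_presKerLe_one {w : ℕ} (hw : w < p) :
    y • natVar R p w - x • natVar R p (w + 1) ∈ presKerLe (monomialGens x y p) 1 := by
  have hhom : (y • natVar R p w - x • natVar R p (w + 1)).IsHomogeneous 1 :=
    sub_mem (Submodule.smul_mem (homogeneousSubmodule _ R 1) y (isHomogeneous_natVar w))
      (Submodule.smul_mem _ x (isHomogeneous_natVar _))
  refine Ideal.subset_span ⟨(mem_presKer_iff_of_isHomogeneous hhom).mpr ?_, 1, le_rfl, hhom⟩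
  rw [map_sub, map_smul, map_smul, aeval_natVar hw.le, aeval_natVar (show w + 1 ≤ p from hw),
    smul_eq_mul, smul_eq_mul, ← Nat.sub_add_cancel (Nat.sub_pos_of_lt hw), Nat.sub_sub]
  ring

theorem smul_stdMonomial_sub_mem_presKerLe_one {n w : ℕ} (hw : w < n * p) :
    y • stdMonomial R p n w - x • stdMonomial R p n (w + 1) ∈
      presKerLe (monomialGens x y p) 1 := by
  induction n generalizing w with
  | zero => omega
  | succ n ih =>
    rcases lt_or_ge w p with hwp | hwp
    · rw [stdMonomial_succ_of_le hwp.le, stdMonomial_succ_of_le hwp, ← mul_smul_comm,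
        ← mul_smul_comm, ← mul_sub]
      exact Ideal.mul_mem_left _ _ (smul_natVar_sub_mem_presKerLe_one hwp)
    · obtain ⟨v, rfl⟩ := Nat.exists_eq_add_of_le hwp
      rw [add_mul, one_mul] at hw
      rw [add_assoc, stdMonomial_succ_add, stdMonomial_succ_add, ← mul_smul_comm,
        ← mul_smul_comm, ← mul_sub]
      exact Ideal.mul_mem_left _ _ (ih (by omega))

theorem quadric_mem_presKerHomog (s : QuadricIndex p) :
    quadric R p s ∈ presKerHomog (monomialGens x y p) 2 := by
  obtain ⟨⟨j, hj⟩, ⟨i, hi⟩⟩ := s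
  simp only at hi
  refine ⟨isHomogeneous_quadric _,
    (mem_presKer_iff_of_isHomogeneous (isHomogeneous_quadric _)).mpr ?_⟩
  rw [quadric, map_sub, map_mul, aeval_natVar (by omega), aeval_natVar hj.le,
    aeval_stdMonomial (by omega), show 2 * p - (i + 1 + j) = p - (i + 1) + (p - j) by omega]
  ring

theorem presKerHomog_le_of_homogeneousSubmodule_le (h : IsWeaklyRegular R [x, y]) {n : ℕ}
    {N : Submodule R (MvPolynomial (Fin (p + 1)) R)}
    (hN : N ≤ (presKer (monomialGens x y p)).restrictScalars R)
    (hlin : ∀ w < n * p, y • stdMonomial R p n w - x • stdMonomial R p n (w + 1) ∈ N)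
    (hspan : homogeneousSubmodule (Fin (p + 1)) R n ≤
      N ⊔ Submodule.span R (stdMonomial R p n '' Finset.range (n * p + 1))) :
    presKerHomog (monomialGens x y p) n ≤ N := by
  rintro F ⟨hFhom, hFker⟩
  obtain ⟨G, hG, H, hH, rfl⟩ := Submodule.mem_sup.mp (hspan hFhom)
  refine N.add_mem hG ?_
  have hHker : H ∈ presKer (monomialGens x y p) :=
    ((presKer (monomialGens x y p)).add_mem_iff_right (hN hG)).mp hFker
  have hHhom : H.IsHomogeneous n := by
    refine (Submodule.span_le (p := homogeneousSubmodule _ R n)).mpr ?_ hH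
    rintro _ ⟨w, -, rfl⟩
    exact isHomogeneous_stdMonomial n w
  rw [mem_presKer_iff_of_isHomogeneous hHhom] at hHker
  obtain ⟨c, rfl⟩ := (Submodule.mem_span_image_finset_iff_exists_fun' R).mp hH
  refine sum_smul_mem_of_sum_mul_pow_eq_zero h hlin ?_
  rw [← hHker, map_sum]
  refine Finset.sum_congr rfl fun w hw => ?_
  rw [map_smul, aeval_stdMonomial (Finset.mem_range_succ_iff.mp hw), smul_eq_mul]

theorem presKer_eq_presKerLe_two (h : IsWeaklyRegular R [x, y]) :
    presKer (monomialGens x y p) = presKerLe (monomialGens x y p) 2 := by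
  have hquadric : (Ideal.span (Set.range (quadric R p))).restrictScalars R ≤
      (presKerLe (monomialGens x y p) 2).restrictScalars R := by
    refine Ideal.span_le.mpr ?_
    rintro _ ⟨s, rfl⟩
    exact presKerHomog_le_presKerLe 2 (quadric_mem_presKerHomog s)
  refine le_antisymm (presKer_le_of_forall_presKerHomog_le fun n => ?_) (presKerLe_le_presKer 2)
  exact presKerHomog_le_of_homogeneousSubmodule_le h (presKerLe_le_presKer 2)
    (fun w hw => presKerLe_mono one_le_two (smul_stdMonomial_sub_mem_presKerLe_one hw))
    ((homogeneousSubmodule_le_span_quadric_sup_span_stdMonomial n).trans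
      (sup_le_sup_right hquadric _))

theorem presKerHomog_two_le_presKerLe_one_sup_span_quadric (h : IsWeaklyRegular R [x, y]) :
    presKerHomog (monomialGens x y p) 2 ≤
      (presKerLe (monomialGens x y p) 1).restrictScalars R ⊔
        Submodule.span R (Set.range (quadric R p)) := by
  refine presKerHomog_le_of_homogeneousSubmodule_le h
    (sup_le (presKerLe_le_presKer 1) (Submodule.span_le.mpr ?_))
    (fun w hw => Submodule.mem_sup_left (smul_stdMonomial_sub_mem_presKerLe_one hw))
    (homogeneousSubmodule_two_le_span_quadric_sup_span_stdMonomial.trans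
      (sup_le_sup_right le_sup_right _))
  rintro _ ⟨s, rfl⟩
  exact (quadric_mem_presKerHomog s).2

theorem presKerLe_one_le_map_C (h : IsWeaklyRegular R [x, y]) :
    presKerLe (monomialGens x y p) 1 ≤ Ideal.map C (Ideal.span {x, y}) := by
  have hlinear : presKerHomog (monomialGens x y p) 1 ≤
      (Ideal.map C (Ideal.span {x, y}) ⊓ presKer (monomialGens x y p)).restrictScalars R := by
    refine presKerHomog_le_of_homogeneousSubmodule_le h (fun _ hF => hF.2) (fun w hw => ⟨?_, ?_⟩) ?_
    · rw [smul_eq_C_mul, smul_eq_C_mul]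
      exact sub_mem
        (Ideal.mul_mem_right _ _ (Ideal.mem_map_of_mem C (Ideal.subset_span (by simp))))
        (Ideal.mul_mem_right _ _ (Ideal.mem_map_of_mem C (Ideal.subset_span (by simp))))
    · exact presKerLe_le_presKer 1 (smul_stdMonomial_sub_mem_presKerLe_one hw)
    · rw [homogeneousSubmodule_one_eq_span_natVar, one_mul, Set.image_congr fun w hw =>
        (stdMonomial_one (Finset.mem_range_succ_iff.mp hw)).symm]
      exact le_sup_right
  refine Ideal.span_le.mpr ?_
  rintro F ⟨hFker, k, hk, hFhom⟩
  interval_cases k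
  · have hF0 : F = 0 := by
      have hF : F ∈ presKerHomog (monomialGens x y p) 0 := ⟨hFhom, hFker⟩
      rwa [presKerHomog_zero, Submodule.mem_bot] at hF
    exact hF0 ▸ Ideal.zero_mem _
  · exact (hlinear ⟨hFhom, hFker⟩).1

theorem coeff_mem_of_mem_presKerLe_one (h : IsWeaklyRegular R [x, y])
    {F : MvPolynomial (Fin (p + 1)) R} (hF : F ∈ presKerLe (monomialGens x y p) 1)
    (d : Fin (p + 1) →₀ ℕ) : coeff d F ∈ Ideal.span {x, y} :=
  mem_map_C_iff.mp (presKerLe_one_le_map_C h hF) d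

theorem presKer_ne_presKerLe_one (h : IsRegular R [x, y]) (hp : 2 ≤ p) :
    presKer (monomialGens x y p) ≠ presKerLe (monomialGens x y p) 1 := by
  intro heq
  let s : QuadricIndex p := ⟨⟨1, hp⟩, ⟨0, one_pos⟩⟩
  have hcoeff := coeff_mem_of_mem_presKerLe_one h.toIsWeaklyRegular
    (heq ▸ (quadric_mem_presKerHomog s).2) (quadricExponent s)
  rw [coeff_quadricExponent_quadric, if_pos rfl, ← Ideal.eq_top_iff_one] at hcoeff
  exact span_pair_ne_top_of_isRegular h hcoeff

end MonomialGenerators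

section MinimalNumberOfGenerators

open RingTheory.Sequence

variable {R : Type*} [CommRing R]

theorem isLeast_card_span_eq_top {M A ι : Type*} [AddCommGroup M] [Module R M] [CommRing A]
    [Nontrivial A] [Algebra R A] [Fintype ι] [DecidableEq ι] (φ : M →ₗ[R] (ι → A)) {v : ι → M}
    (hφ : ∀ i, φ (v i) = Pi.single i 1) (hv : Submodule.span R (Set.range v) = ⊤) :
    IsLeast {c | ∃ S : Finset M, S.card = c ∧ Submodule.span R (S : Set M) = ⊤}
      (Fintype.card ι) := by
  classical
  refine ⟨⟨Finset.univ.image v, ?_, by simpa using hv⟩, ?_⟩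
  · have hinj : Function.Injective v := by
      refine Function.Injective.of_comp (f := φ) fun i j hij => ?_
      simpa only [Function.comp_apply, hφ, ← Pi.basisFun_apply, (Pi.basisFun A ι).injective.eq_iff]
        using hij
    rw [Finset.card_image_of_injective _ hinj, Finset.card_univ]
  · rintro _ ⟨S, rfl, hS⟩
    have hspan : Submodule.span A (S.image φ : Set (ι → A)) = ⊤ := by
      rw [eq_top_iff, ← (Pi.basisFun A ι).span_eq, Submodule.span_le]
      rintro _ ⟨i, rfl⟩
      have hmem : φ (v i) ∈ (Submodule.span R (S : Set M)).map φ :=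
        Submodule.mem_map_of_mem (hS ▸ Submodule.mem_top)
      rw [Submodule.map_span] at hmem
      rw [Pi.basisFun_apply, ← hφ, Finset.coe_image]
      exact Submodule.span_le_restrictScalars R A _ hmem
    calc Fintype.card ι = (S.image φ : Set (ι → A)).finrank A := by
          rw [Set.finrank, hspan, finrank_top, Module.finrank_fintype_fun_eq_card]
      _ ≤ (S.image φ).card := finrank_span_finset_le_card _
      _ ≤ S.card := Finset.card_image_le

variable {x y : R} {p : ℕ}

/-- The class of `quadric R p s` in `(Q/Q⟨1⟩)₂`. -/
noncomputable def quadricClass (x y : R) (s : QuadricIndex p) : presE (monomialGens x y p) 2 :=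
  Submodule.Quotient.mk ⟨quadric R p s, quadric_mem_presKerHomog s⟩

theorem span_quadricClass (h : IsWeaklyRegular R [x, y]) :
    Submodule.span R (Set.range (quadricClass (p := p) x y)) = ⊤ := by
  let q (s : QuadricIndex p) : presKerHomog (monomialGens x y p) 2 :=
    ⟨quadric R p s, quadric_mem_presKerHomog s⟩
  have hmap : (Submodule.span R (Set.range q)).map (presKerHomog (monomialGens x y p) 2).subtype =
      Submodule.span R (Set.range (quadric R p)) := by
    rw [Submodule.map_span, ← Set.range_comp]
    rfl
  have hrange : Set.range (quadricClass (p := p) x y) = Submodule.mkQ _ '' Set.range q :=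
    Set.range_comp _ q
  rw [hrange, ← Submodule.map_span, Submodule.map_mkQ_eq_top, eq_top_iff]
  intro F _
  obtain ⟨L, hL, G, hG, hF⟩ :=
    Submodule.mem_sup.mp (presKerHomog_two_le_presKerLe_one_sup_span_quadric h F.2)
  rw [← hmap] at hG
  obtain ⟨G, hG, rfl⟩ := hG
  refine Submodule.mem_sup.mpr ⟨F - G, ?_, G, hG, sub_add_cancel F G⟩
  rwa [Submodule.mem_comap, map_sub, Submodule.subtype_apply, ← hF, add_sub_cancel_right]

/-- The coefficients modulo `(x, y)` of a degree two equation at the non-standard monomials of the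
quadrics, as a map on `(Q/Q⟨1⟩)₂`. -/
noncomputable def quadricCoeff (h : IsWeaklyRegular R [x, y]) :
    presE (monomialGens x y p) 2 →ₗ[R] (QuadricIndex p → R ⧸ Ideal.span {x, y}) :=
  Submodule.liftQ _
    (LinearMap.pi fun s => (Algebra.linearMap R (R ⧸ Ideal.span {x, y})) ∘ₗ
      lcoeff R (quadricExponent s) ∘ₗ (presKerHomog (monomialGens x y p) 2).subtype)
    fun _ hF => funext fun _ => Ideal.Quotient.eq_zero_iff_mem.mpr
      (coeff_mem_of_mem_presKerLe_one h hF _)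

theorem quadricCoeff_quadricClass (h : IsWeaklyRegular R [x, y]) (s : QuadricIndex p) :
    quadricCoeff h (quadricClass x y s) = Pi.single s 1 := by
  ext t
  change Ideal.Quotient.mk _ (coeff (quadricExponent t) (quadric R p s)) = _
  rw [coeff_quadricExponent_quadric, Pi.single_apply, apply_ite (Ideal.Quotient.mk _), map_one,
    map_zero]
  simp only [eq_comm]

end MinimalNumberOfGenerators

theorem statement9_general {R : Type*} [CommRing R] {x y : R}
    (h : RingTheory.Sequence.IsRegular R [x, y]) {p : ℕ} (hp : 2 ≤ p) :
    IsLeast {N : ℕ | 1 ≤ N ∧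
      presKer (monomialGens x y p) = presKerLe (monomialGens x y p) N} 2 ∧
    IsLeast {c : ℕ | ∃ S : Finset (presE (monomialGens x y p) 2),
      S.card = c ∧ Submodule.span R (S : Set (presE (monomialGens x y p) 2)) = ⊤}
      (p.choose 2) := by
  have hweak := h.toIsWeaklyRegular
  refine ⟨⟨⟨one_le_two, presKer_eq_presKerLe_two hweak⟩, ?_⟩, ?_⟩
  · rintro N ⟨hN, heq⟩
    by_contra! hlt
    obtain rfl : N = 1 := by omega
    exact presKer_ne_presKerLe_one h hp heq
  · have : Nontrivial (R ⧸ Ideal.span {x, y}) :=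
      Ideal.Quotient.nontrivial_iff.mpr (span_pair_ne_top_of_isRegular h)
    rw [← card_quadricIndex]
    exact isLeast_card_span_eq_top (quadricCoeff hweak) (quadricCoeff_quadricClass hweak)
      (span_quadricClass hweak)

/-- Let `(R,m)` be a two-dimensional regular local ring with regular system of
parameters `x,y` and let `p ≥ 2`.  Present the Rees algebra of `mᵖ` with respect to the
generators `xᵖ, xᵖ⁻¹y, …, yᵖ`.  Then `rt(mᵖ) = 2` and a minimal homogeneous generating
set of `Q` contains exactly `C(p,2)` equations of degree `2`, i.e. the minimal number of
generators of `(Q/Q⟨1⟩)₂` is `C(p,2)`. -/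
theorem statement9 {R : Type*} [CommRing R] [IsNoetherianRing R] [IsLocalRing R]
    (hdim : ringKrullDim R = (2 : WithBot (WithTop ℕ)))
    (x y : R) (hm : IsLocalRing.maximalIdeal R = Ideal.span {x, y})
    (p : ℕ) (hp : 2 ≤ p) :
    IsLeast {N : ℕ | 1 ≤ N ∧
      presKer (fun i : Fin (p + 1) => x ^ (p - (i : ℕ)) * y ^ (i : ℕ))
        = presKerLe (fun i : Fin (p + 1) => x ^ (p - (i : ℕ)) * y ^ (i : ℕ)) N} 2 ∧
    IsLeast {c : ℕ | ∃ S : Finset (presE (fun i : Fin (p + 1) => x ^ (p - (i : ℕ)) * y ^ (i : ℕ)) 2),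
      S.card = c ∧
      Submodule.span R (S : Set (presE (fun i : Fin (p + 1) => x ^ (p - (i : ℕ)) * y ^ (i : ℕ)) 2)) = ⊤}
      (p.choose 2) := by
  exact statement9_general
    (isRegular_of_maximalIdeal_eq_span_pair (hdim ▸ Nat.one_lt_ofNat) hm) hp
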